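/- (Corollary 8, dictionary learning.) Suppose Y = θ* + W ∈ ℝ^{n×d} where θ* = Q*Z* for some Q* ∈ ℝ^{n×p*} and Z* ∈ 𝒵̄_{p*,s*}, and W is sub-Gaussian with parameter ρ. Then for any constants λ, ρ > 0 and any sufficiently small constant δ ∈ (0,1), there exists a constant D_{λ,δ,ρ} > 0 depending only on λ, δ, ρ such that for every D > D_{λ,δ,ρ} there exist constants M, C', C'' > 0 depending only on λ, δ, ρ, D with: E Π( np + ds log(ep/s) > (1+δ)(np* + ds* log(ep*/s*)) | Y ) ≤ exp(−C'(np* + ds* log(ep*/s*))) and E Π( ‖θ − θ*‖_F² > M(np* + ds* log(ep*/s*)) | Y ) ≤ exp(−C''(np* + ds* log(ep*/s*))). -/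

import Mathlib

open MeasureTheory Real Matrix
open scoped ENNReal Classical

/-- Euclidean norm of a finitely-indexed real vector. -/
noncomputable def enr {ι : Type*} [Fintype ι] (v : ι → ℝ) : ℝ :=
  Real.sqrt (∑ i, v i ^ 2)

/-- Euclidean inner product. -/
noncomputable def ipr {ι : Type*} [Fintype ι] (u v : ι → ℝ) : ℝ :=
  ∑ i, u i * v i

/-- Sub-Gaussian condition (2.2): `P(|⟨W,K⟩| > t) ≤ exp(-ρ t²/2)` for every unit vector `K`. -/
def subG {ι Ω : Type*} [Fintype ι] [MeasurableSpace Ω] (P : Measure Ω) (ρ : ℝ)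
    (W : Ω → ι → ℝ) : Prop :=
  ∀ K : ι → ℝ, enr K = 1 → ∀ t : ℝ, 0 < t →
    P {ω | t < |ipr (W ω) K|} ≤ ENNReal.ofReal (Real.exp (-ρ * t ^ 2 / 2))

/-- Determinant of the Gram matrix `AᵀA`. -/
noncomputable def gramDet {N κ : Type*} [Fintype N] [Fintype κ] [DecidableEq κ]
    (A : Matrix N κ ℝ) : ℝ := (Aᵀ * A).det

/-- Generic posterior probability for a structured linear model.
`ι` indexes the models (structures), `κ i` the coordinates of the parameter of model `i`,
`A i` is the matrix of the linear operator `𝒳` of model `i`, `w i` the model-selection prior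
weight (with the Gamma-correction already cancelled against the Laplace normalizing constant),
`emb i` maps a parameter to the object the posterior statement is about, `Y` is the data,
`Sel` restricts the model index and `U` the embedded parameter. -/
noncomputable def gpostP {Θ N ι : Type*} [Fintype N] [Fintype ι]
    {κ : ι → Type*} [∀ i, Fintype (κ i)] [∀ i, DecidableEq (κ i)]
    (w : ι → ℝ) (A : (i : ι) → Matrix N (κ i) ℝ)
    (emb : (i : ι) → (κ i → ℝ) → Θ) (lam : ℝ) (Y : N → ℝ)
    (Sel : Set ι) (U : Set Θ) : ℝ :=
  (∑ i : ι, (if i ∈ Sel then w i else 0) * Real.sqrt (gramDet (A i)) *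
      (lam / Real.sqrt π) ^ Fintype.card (κ i) *
      ∫ Q in {Q : κ i → ℝ | emb i Q ∈ U},
        Real.exp (-(1/2) * (enr fun t => Y t - (A i).mulVec Q t) ^ 2
          - lam * enr ((A i).mulVec Q))) /
  (∑ i : ι, w i * Real.sqrt (gramDet (A i)) *
      (lam / Real.sqrt π) ^ Fintype.card (κ i) *
      ∫ Q : κ i → ℝ,
        Real.exp (-(1/2) * (enr fun t => Y t - (A i).mulVec Q t) ^ 2
          - lam * enr ((A i).mulVec Q)))

/-- The values `{-1,0,1}` coded by `Fin 3`. -/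
noncomputable def tern (t : Fin 3) : ℝ := ((t : ℕ) : ℝ) - 1

/-- The coefficient matrix `Z ∈ {-1,0,1}^{p×d}` coded by a `Fin 3`-valued array. -/
noncomputable def dictZmat {p d : ℕ} (z : Fin p → Fin d → Fin 3) :
    Matrix (Fin p) (Fin d) ℝ := fun t j => tern (z t j)

/-- Membership in `𝒵̄_{p,s}`: every column of `Z` has at most `s` nonzero entries and
`det(ZZᵀ) > 0`. -/
def dictOK {p d : ℕ} (s : ℕ) (z : Fin p → Fin d → Fin 3) : Prop :=
  (∀ j : Fin d, (Finset.univ.filter fun t => tern (z t j) ≠ 0).card ≤ s) ∧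
    0 < (dictZmat z * (dictZmat z)ᵀ).det

/-- The design matrix of the dictionary-learning model: it maps the dictionary
`Q ∈ ℝ^{n×p}` to the signal matrix `θ = QZ ∈ ℝ^{n×d}`. -/
noncomputable def dictX {p d : ℕ} (n : ℕ) (z : Fin p → Fin d → Fin 3) :
    Matrix (Fin n × Fin d) (Fin n × Fin p) ℝ :=
  fun a b => if a.1 = b.1 then tern (z b.2 a.2) else 0

/-- The posterior distribution of the dictionary-learning prior: `(p,s)` is sampled with
weight proportional to `(Γ(np)/Γ(np/2)) exp(-3D(np + ds log(ep/s)))` on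
`{(p,s) ∈ [n∧d]×[n] : s ≤ p}`, `Z` uniformly from `𝒵̄_{p,s}`, `Q` from the elliptical
Laplace density `∝ exp(-λ‖QZ‖_F)`, and the Gaussian pseudo-likelihood
`∝ exp(-½‖Y - QZ‖_F²)` is used; `K` restricts `(p,s)` and `U` restricts the signal
matrix `θ = QZ`.  (The Gamma correction factor has been cancelled.) -/
noncomputable def dictPost (n d : ℕ) (D lam : ℝ) (Y : Fin n × Fin d → ℝ)
    (K : Set (ℕ × ℕ)) (U : Set (Fin n × Fin d → ℝ)) : ℝ :=
  gpostP
    (fun i : Σ ps : Fin (n ⊓ d) × Fin n, (Fin ((ps.1 : ℕ) + 1) → Fin d → Fin 3) =>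
      (if ((i.1.2 : ℕ) + 1) ≤ ((i.1.1 : ℕ) + 1) ∧ dictOK ((i.1.2 : ℕ) + 1) i.2
        then 1 else 0) *
        Real.exp (-3 * D * ((n : ℝ) * (((i.1.1 : ℕ) + 1 : ℕ) : ℝ)
          + (d : ℝ) * (((i.1.2 : ℕ) + 1 : ℕ) : ℝ) *
            Real.log (Real.exp 1 * (((i.1.1 : ℕ) + 1 : ℕ) : ℝ)
              / (((i.1.2 : ℕ) + 1 : ℕ) : ℝ)))) *
        ((Finset.univ.filter fun z' : Fin ((i.1.1 : ℕ) + 1) → Fin d → Fin 3 =>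
            dictOK ((i.1.2 : ℕ) + 1) z').card : ℝ)⁻¹)
    (fun i => dictX n i.2)
    (fun i Q => (dictX n i.2).mulVec Q)
    lam Y {i | (((i.1.1 : ℕ) + 1), ((i.1.2 : ℕ) + 1)) ∈ K} U


/-! ### Part 1: Euclidean bridging and Gaussian integrals -/

lemma enr_sq {ι : Type*} [Fintype ι] (v : ι → ℝ) : enr v ^ 2 = ∑ i, v i ^ 2 := by
  unfold enr
  exact Real.sq_sqrt (Finset.sum_nonneg fun i _ => sq_nonneg _)

lemma enr_nonneg {ι : Type*} [Fintype ι] (v : ι → ℝ) : 0 ≤ enr v := Real.sqrt_nonneg _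

lemma enr_eq {ι : Type*} [Fintype ι] (v : ι → ℝ) : enr v = ‖WithLp.toLp 2 v‖ := by
  simp [enr, EuclideanSpace.norm_eq]

lemma ipr_eq {ι : Type*} [Fintype ι] (u v : ι → ℝ) :
    ipr u v = inner ℝ (WithLp.toLp 2 u) (WithLp.toLp 2 v) := by
  simp [ipr, EuclideanSpace.inner_eq_star_dotProduct, dotProduct, mul_comm]

lemma enr_le_add {ι : Type*} [Fintype ι] (u v : ι → ℝ) :
    enr u ≤ enr v + enr (fun t => u t - v t) := by
  have h : (WithLp.toLp 2 (fun t => u t - v t) : EuclideanSpace ℝ ι)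
      = WithLp.toLp 2 u - WithLp.toLp 2 v := rfl
  rw [enr_eq, enr_eq, enr_eq, h]
  exact norm_le_insert' _ _

lemma enr_le_add' {ι : Type*} [Fintype ι] (u v : ι → ℝ) :
    enr v ≤ enr u + enr (fun t => u t - v t) := by
  have h : (WithLp.toLp 2 (fun t => u t - v t) : EuclideanSpace ℝ ι)
      = WithLp.toLp 2 u - WithLp.toLp 2 v := rfl
  rw [enr_eq, enr_eq, enr_eq, h]
  exact norm_le_insert _ _

lemma enr_sq_dot {ι : Type*} [Fintype ι] (v : ι → ℝ) : enr v ^ 2 = v ⬝ᵥ v := by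
  rw [enr_sq]; simp [dotProduct, sq]

lemma continuous_enr {ι : Type*} [Fintype ι] : Continuous (fun v : ι → ℝ => enr v) := by
  unfold enr; fun_prop

lemma continuous_mulVec' {N κ : Type*} [Fintype N] [Fintype κ] (A : Matrix N κ ℝ) :
    Continuous (fun Q : κ → ℝ => A.mulVec Q) := by
  exact Continuous.matrix_mulVec continuous_const continuous_id

open scoped MatrixOrder in
lemma exists_sq_factor {N κ : Type*} [Fintype N] [Fintype κ] [DecidableEq κ]
    (A : Matrix N κ ℝ) : ∃ S : Matrix κ κ ℝ, Aᵀ * A = Sᵀ * S := by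
  have h : (Aᵀ * A).PosSemidef := by
    simpa using Matrix.posSemidef_conjTranspose_mul_self A
  obtain ⟨B, hB⟩ := CStarAlgebra.nonneg_iff_eq_star_mul_self.mp h.nonneg
  refine ⟨B, ?_⟩
  rw [hB, Matrix.star_eq_conjTranspose, Matrix.conjTranspose_eq_transpose_of_trivial]

lemma gauss_std {κ : Type*} [Fintype κ] (c : ℝ) (hc : 0 < c) :
    Integrable (fun x : κ → ℝ => Real.exp (-c * enr x ^ 2)) ∧
    ∫ x : κ → ℝ, Real.exp (-c * enr x ^ 2) = Real.sqrt (π / c) ^ Fintype.card κ := by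
  have e : (fun x : κ → ℝ => Real.exp (-c * enr x ^ 2))
      = fun x => ∏ i, Real.exp (-c * x i ^ 2) := by
    funext x
    rw [enr_sq, Finset.mul_sum, Real.exp_sum]
  rw [e]
  constructor
  · exact Integrable.fintype_prod (f := fun _ y => Real.exp (-c * y ^ 2))
      (fun _ => integrable_exp_neg_mul_sq hc)
  · rw [integral_fintype_prod_volume_eq_pow (fun y : ℝ => Real.exp (-c * y ^ 2)),
      integral_gaussian]

lemma enr_mulVec_sq {N κ : Type*} [Fintype N] [Fintype κ] [DecidableEq κ]
    (A : Matrix N κ ℝ) (Q : κ → ℝ) : enr (A.mulVec Q) ^ 2 = Q ⬝ᵥ (Aᵀ * A).mulVec Q := by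
  rw [enr_sq_dot, ← Matrix.mulVec_mulVec, Matrix.dotProduct_mulVec Q,
    Matrix.vecMul_transpose]

lemma gauss_lin {N κ : Type*} [Fintype N] [Fintype κ] [DecidableEq κ]
    (A : Matrix N κ ℝ) (hA : 0 < gramDet A) (c : ℝ) (hc : 0 < c) :
    Integrable (fun Q : κ → ℝ => Real.exp (-c * enr (A.mulVec Q) ^ 2)) ∧
    Real.sqrt (gramDet A) * ∫ Q : κ → ℝ, Real.exp (-c * enr (A.mulVec Q) ^ 2)
      = Real.sqrt (π / c) ^ Fintype.card κ := by
  obtain ⟨S, hS⟩ := exists_sq_factor A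
  have hdet : gramDet A = S.det ^ 2 := by
    rw [gramDet, hS, Matrix.det_mul, Matrix.det_transpose, sq]
  have hne : S.det ≠ 0 := by
    intro h; rw [hdet, h] at hA; simp at hA
  have e : (fun Q : κ → ℝ => Real.exp (-c * enr (A.mulVec Q) ^ 2))
      = fun Q => (fun x => Real.exp (-c * enr x ^ 2)) (Matrix.toLin' S Q) := by
    funext Q
    simp only [Matrix.toLin'_apply]
    rw [enr_mulVec_sq, enr_mulVec_sq, hS]
  have hmap := Real.map_matrix_volume_pi_eq_smul_volume_pi hne
  have hmeas : Measurable (Matrix.toLin' S) :=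
    (continuous_mulVec' S).measurable
  have hcont : Continuous (fun x : κ → ℝ => Real.exp (-c * enr x ^ 2)) := by
    have := continuous_enr (ι := κ)
    fun_prop
  obtain ⟨h1, h2⟩ := gauss_std (κ := κ) c hc
  rw [e]
  constructor
  · have : Integrable (fun x : κ → ℝ => Real.exp (-c * enr x ^ 2))
        (Measure.map (Matrix.toLin' S) volume) := by
      rw [hmap]; exact h1.smul_measure ENNReal.ofReal_ne_top
    exact (integrable_map_measure hcont.aestronglyMeasurable hmeas.aemeasurable).1 this
  · rw [← integral_map hmeas.aemeasurable (f := fun x => Real.exp (-c * enr x ^ 2))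
      hcont.aestronglyMeasurable, hmap, integral_smul_measure, h2, hdet, Real.sqrt_sq_eq_abs,
      ENNReal.toReal_ofReal (abs_nonneg _), smul_eq_mul, ← mul_assoc, abs_inv,
      mul_inv_cancel₀ (abs_ne_zero.2 hne), one_mul]

lemma exists_center {N κ : Type*} [Fintype N] [Fintype κ] [DecidableEq κ]
    (A : Matrix N κ ℝ) (hA : 0 < gramDet A) (θ : N → ℝ) :
    ∃ Q0 : κ → ℝ, ∀ Q : κ → ℝ,
      enr (A.mulVec (Q - Q0)) ^ 2 ≤ enr (fun t => A.mulVec Q t - θ t) ^ 2 := by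
  have hu : IsUnit (Aᵀ * A).det := isUnit_iff_ne_zero.2 hA.ne'
  refine ⟨(Aᵀ * A)⁻¹.mulVec (Aᵀ.mulVec θ), fun Q => ?_⟩
  set Q0 := (Aᵀ * A)⁻¹.mulVec (Aᵀ.mulVec θ) with hQ0
  have horth : Aᵀ.mulVec (A.mulVec Q0 - θ) = 0 := by
    rw [Matrix.mulVec_sub, Matrix.mulVec_mulVec, hQ0, Matrix.mulVec_mulVec,
      Matrix.mul_nonsing_inv _ hu, Matrix.one_mulVec, sub_self]
  have h1 : (fun t => A.mulVec Q t - θ t) = A.mulVec (Q - Q0) + (A.mulVec Q0 - θ) := by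
    rw [Matrix.mulVec_sub]; funext t; simp
  have h2 : A.mulVec (Q - Q0) ⬝ᵥ (A.mulVec Q0 - θ) = 0 := by
    rw [dotProduct_comm, Matrix.dotProduct_mulVec, ← Matrix.mulVec_transpose, horth,
      zero_dotProduct]
  rw [h1, enr_sq_dot, enr_sq_dot, add_dotProduct, dotProduct_add, dotProduct_add,
    dotProduct_comm (A.mulVec Q0 - θ), h2, ← enr_sq_dot (A.mulVec Q0 - θ)]
  nlinarith [sq_nonneg (enr (A.mulVec Q0 - θ))]

lemma gauss_le {N κ : Type*} [Fintype N] [Fintype κ] [DecidableEq κ]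
    (A : Matrix N κ ℝ) (hA : 0 < gramDet A) (c : ℝ) (hc : 0 < c) (θ : N → ℝ) :
    Integrable (fun Q : κ → ℝ => Real.exp (-c * enr (fun t => A.mulVec Q t - θ t) ^ 2)) ∧
    Real.sqrt (gramDet A) * ∫ Q : κ → ℝ, Real.exp (-c * enr (fun t => A.mulVec Q t - θ t) ^ 2)
      ≤ Real.sqrt (π / c) ^ Fintype.card κ := by
  obtain ⟨Q0, hQ0⟩ := exists_center A hA θ
  obtain ⟨h1, h2⟩ := gauss_lin A hA c hc
  have h3 := h1.comp_sub_right Q0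
  have hle : ∀ Q, Real.exp (-c * enr (fun t => A.mulVec Q t - θ t) ^ 2)
      ≤ Real.exp (-c * enr (A.mulVec (Q - Q0)) ^ 2) := fun Q => by
    apply Real.exp_le_exp.2
    nlinarith [hQ0 Q]
  have hcont : Continuous
      (fun Q : κ → ℝ => Real.exp (-c * enr (fun t => A.mulVec Q t - θ t) ^ 2)) := by
    have a1 := continuous_mulVec' A
    have a2 : Continuous (fun Q : κ → ℝ => fun t => A.mulVec Q t - θ t) :=
      a1.sub continuous_const
    have a3 := continuous_enr.comp a2
    simp only [Function.comp_def] at a3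
    fun_prop
  have h4 : Integrable
      (fun Q : κ → ℝ => Real.exp (-c * enr (fun t => A.mulVec Q t - θ t) ^ 2)) := by
    refine h3.mono' hcont.aestronglyMeasurable (Filter.Eventually.of_forall fun Q => ?_)
    rw [Real.norm_eq_abs, abs_of_pos (Real.exp_pos _)]
    exact hle Q
  refine ⟨h4, ?_⟩
  rw [← h2, ← integral_sub_right_eq_self
    (fun Q : κ → ℝ => Real.exp (-c * enr (A.mulVec Q) ^ 2)) Q0]
  exact mul_le_mul_of_nonneg_left (integral_mono h4 h3 hle) (Real.sqrt_nonneg _)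

lemma gauss_eq {N κ : Type*} [Fintype N] [Fintype κ] [DecidableEq κ]
    (A : Matrix N κ ℝ) (hA : 0 < gramDet A) (c : ℝ) (hc : 0 < c) (Q0 : κ → ℝ) :
    Real.sqrt (gramDet A) *
      ∫ Q : κ → ℝ, Real.exp (-c * enr (fun t => A.mulVec Q t - A.mulVec Q0 t) ^ 2)
      = Real.sqrt (π / c) ^ Fintype.card κ := by
  rw [← (gauss_lin A hA c hc).2, ← integral_sub_right_eq_self
    (fun Q : κ → ℝ => Real.exp (-c * enr (A.mulVec Q) ^ 2)) Q0]
  simp only [Matrix.mulVec_sub]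
  rfl

/-! ### Part 2: nets and the noise bound -/

lemma net_exists (E : Type*) [NormedAddCommGroup E] [NormedSpace ℝ E] [FiniteDimensional ℝ E] :
    ∃ T : Finset E, T.card ≤ 5 ^ Module.finrank ℝ E ∧
      ∀ v : E, ‖v‖ ≤ 2 → ∃ c ∈ T, ‖c‖ ≤ 2 ∧ ‖v - c‖ < 1 := by
  let Pr : Finset E → Prop := fun T =>
    (∀ c ∈ T, ‖c‖ ≤ 2) ∧ ∀ c ∈ T, ∀ d ∈ T, c ≠ d → 1 ≤ ‖c - d‖
  have hb : ∀ T, Pr T → T.card ≤ 5 ^ Module.finrank ℝ E := fun T hT =>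
    Besicovitch.card_le_of_separated T hT.1 hT.2
  have h0 : Pr ∅ := ⟨by simp, by simp⟩
  have hex := Nat.findGreatest_spec (P := fun k => ∃ T, Pr T ∧ T.card = k)
    (Nat.zero_le (5 ^ Module.finrank ℝ E)) ⟨∅, h0, rfl⟩
  obtain ⟨T, hT, hTc⟩ := hex
  have hmax : ∀ T', Pr T' → T'.card ≤ T.card := fun T' hT' => by
    rw [hTc]
    exact Nat.le_findGreatest (hb T' hT') ⟨T', hT', rfl⟩
  refine ⟨T, hb T hT, fun v hv => ?_⟩
  by_contra hcon
  push Not at hcon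
  have hvT : v ∉ T := fun h => by
    have := hcon v h hv
    simp at this
    linarith
  have hPr : Pr (insert v T) := by
    constructor
    · intro c hc
      rcases Finset.mem_insert.1 hc with rfl | hc
      · exact hv
      · exact hT.1 c hc
    · intro c hc e he hne
      rcases Finset.mem_insert.1 hc with hc | hc <;>
        rcases Finset.mem_insert.1 he with he | he
      · exact absurd (hc.trans he.symm) hne
      · rw [hc]; exact hcon e he (hT.1 e he)
      · rw [norm_sub_rev, he]; exact hcon c hc (hT.1 c hc)
      · exact hT.2 c hc e he hne
  have := hmax _ hPr
  rw [Finset.card_insert_of_notMem hvT] at this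
  omega

lemma subG_scaled {N Ω : Type*} [Fintype N] [MeasurableSpace Ω] (P : Measure Ω) (ρ : ℝ)
    (W : Ω → N → ℝ) (hW : subG P ρ W) (v : EuclideanSpace ℝ N) (t : ℝ) (ht : 0 < t) :
    P {ω | t * ‖v‖ < |inner ℝ (WithLp.toLp 2 (W ω)) v|}
      ≤ ENNReal.ofReal (Real.exp (-ρ * t ^ 2 / 2)) := by
  by_cases hv : v = 0
  · simp [hv]
  have hn : 0 < ‖v‖ := norm_pos_iff.2 hv
  have h1 : enr (fun i => ‖v‖⁻¹ * v i) = 1 := by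
    have : (WithLp.toLp 2 (fun i => ‖v‖⁻¹ * v i) : EuclideanSpace ℝ N) = ‖v‖⁻¹ • v := rfl
    rw [enr_eq, this, norm_smul, norm_inv, norm_norm, inv_mul_cancel₀ hn.ne']
  refine le_trans (measure_mono fun ω hω => ?_) (hW _ h1 t ht)
  simp only [Set.mem_ofPred_eq] at hω ⊢
  have : (WithLp.toLp 2 (fun i => ‖v‖⁻¹ * v i) : EuclideanSpace ℝ N) = ‖v‖⁻¹ • v := rfl
  rw [ipr_eq, this, inner_smul_right, abs_mul, abs_inv, abs_norm, lt_inv_mul_iff₀ hn, mul_comm]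
  exact hω

lemma noise_subspace {N Ω : Type*} [Fintype N] [MeasurableSpace Ω] (P : Measure Ω) (ρ : ℝ)
    (W : Ω → N → ℝ) (hW : subG P ρ W) (V : Submodule ℝ (EuclideanSpace ℝ N)) (k : ℕ)
    (hk : Module.finrank ℝ V ≤ k) (t : ℝ) (ht : 0 < t) :
    P {ω | ¬ ∀ v ∈ V, |inner ℝ (WithLp.toLp 2 (W ω)) v| ≤ 2 * t * ‖v‖}
      ≤ ENNReal.ofReal (5 ^ k * Real.exp (-ρ * t ^ 2 / 2)) := by
  obtain ⟨T, hTc, hT⟩ := net_exists V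
  have hsub : {ω | ¬ ∀ v ∈ V, |inner ℝ (WithLp.toLp 2 (W ω)) v| ≤ 2 * t * ‖v‖}
      ⊆ ⋃ c ∈ T, {ω | t * ‖(c : EuclideanSpace ℝ N)‖
          < |inner ℝ (WithLp.toLp 2 (W ω)) (c : EuclideanSpace ℝ N)|} := by
    intro ω hω
    by_contra hcon
    simp only [Set.mem_iUnion, Set.mem_ofPred_eq, not_exists, not_lt] at hcon
    apply hω
    set x : EuclideanSpace ℝ N := WithLp.toLp 2 (W ω) with hx
    set u : V := V.orthogonalProjectionOnto x with hu
    have hin : ∀ v : V, inner ℝ x (v : EuclideanSpace ℝ N) = inner ℝ u v := fun v => by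
      rw [hu]
      exact (Submodule.inner_orthogonalProjectionOnto_eq_of_mem_right v x).symm
    have hunorm : ‖u‖ ≤ 2 * t := by
      by_cases h0 : u = 0
      · rw [h0, norm_zero]; positivity
      have hn : 0 < ‖u‖ := norm_pos_iff.2 h0
      obtain ⟨c, hc, hc2, hvc⟩ := hT ((2 * ‖u‖⁻¹) • u) (by
        rw [norm_smul, Real.norm_eq_abs, abs_of_pos (by positivity), mul_assoc,
          inv_mul_cancel₀ hn.ne', mul_one])
      have e1 : inner ℝ u ((2 * ‖u‖⁻¹) • u) = 2 * ‖u‖ := by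
        refine (real_inner_smul_right u u (2 * ‖u‖⁻¹)).trans ?_
        rw [real_inner_self_eq_norm_sq]
        field_simp
      have e2 : inner ℝ u ((2 * ‖u‖⁻¹) • u - c) ≤ ‖u‖ * 1 :=
        (real_inner_le_norm _ _).trans (mul_le_mul_of_nonneg_left hvc.le hn.le)
      rw [inner_sub_right, e1] at e2
      have e3 := (le_abs_self _).trans (hcon c hc)
      rw [hin] at e3
      have e4 : ‖(c : EuclideanSpace ℝ N)‖ ≤ 2 := hc2
      nlinarith
    intro v hv
    have := hin ⟨v, hv⟩
    simp only at this
    rw [this]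
    refine (abs_real_inner_le_norm _ _).trans ?_
    exact mul_le_mul_of_nonneg_right hunorm (norm_nonneg _)
  refine (measure_mono hsub).trans ((measure_biUnion_finset_le _ _).trans ?_)
  refine (Finset.sum_le_sum fun (c : V) _ => subG_scaled P ρ W hW (c : EuclideanSpace ℝ N) t ht).trans ?_
  rw [Finset.sum_const, nsmul_eq_mul, ENNReal.ofReal_mul (by positivity)]
  gcongr
  rw [ENNReal.ofReal_pow (by norm_num)]
  have : (T.card : ℝ≥0∞) ≤ ((5 ^ k : ℕ) : ℝ≥0∞) := by
    exact_mod_cast hTc.trans (Nat.pow_le_pow_right (by norm_num) hk)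
  simpa using this

lemma noise_model {N κ Ω : Type*} [Fintype N] [Fintype κ] [MeasurableSpace Ω]
    (P : Measure Ω) (ρ : ℝ)
    (W : Ω → N → ℝ) (hW : subG P ρ W) (A : Matrix N κ ℝ) (θ : N → ℝ) (t : ℝ) (ht : 0 < t) :
    P {ω | ¬ ∀ Q : κ → ℝ, |ipr (W ω) (fun a => A.mulVec Q a - θ a)|
        ≤ 2 * t * enr (fun a => A.mulVec Q a - θ a)}
      ≤ ENNReal.ofReal (5 ^ (Fintype.card κ + 1) * Real.exp (-ρ * t ^ 2 / 2)) := by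
  let f : (κ → ℝ) →ₗ[ℝ] EuclideanSpace ℝ N :=
    (WithLp.linearEquiv 2 ℝ (N → ℝ)).symm.toLinearMap ∘ₗ A.mulVecLin
  let V : Submodule ℝ (EuclideanSpace ℝ N) :=
    LinearMap.range f ⊔ Submodule.span ℝ {(WithLp.toLp 2 θ : EuclideanSpace ℝ N)}
  have hdim : Module.finrank ℝ V ≤ Fintype.card κ + 1 := by
    refine (Submodule.finrank_add_le_finrank_add_finrank _ _).trans (add_le_add ?_ ?_)
    · refine (LinearMap.finrank_range_le f).trans ?_
      simp
    · exact (finrank_span_le_card _).trans (by simp)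
  refine (measure_mono fun ω hω => ?_).trans (noise_subspace P ρ W hW V _ hdim t ht)
  simp only [Set.mem_ofPred_eq] at hω ⊢
  intro hall
  apply hω
  intro Q
  have hmem : (WithLp.toLp 2 (fun a => A.mulVec Q a - θ a) : EuclideanSpace ℝ N) ∈ V := by
    have e : (WithLp.toLp 2 (fun a => A.mulVec Q a - θ a) : EuclideanSpace ℝ N)
        = f Q - WithLp.toLp 2 θ := rfl
    rw [e]
    exact V.sub_mem (Submodule.mem_sup_left (LinearMap.mem_range_self f Q))
      (Submodule.mem_sup_right (Submodule.mem_span_singleton_self _))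
  rw [ipr_eq, enr_eq]
  exact hall _ hmem

/-! ### Part 3: counting -/

lemma tern_ne (x : Fin 3) : tern x ≠ 0 ↔ x ≠ 1 := by
  fin_cases x <;> simp [tern] <;> norm_num

lemma card_col (p s : ℕ) (hs : 1 ≤ s) (hsp : s ≤ p) :
    ((Finset.univ.filter fun v : Fin p → Fin 3 =>
      (Finset.univ.filter fun t => tern (v t) ≠ 0).card ≤ s).card : ℝ)
      ≤ Real.exp (2 * (s * Real.log (Real.exp 1 * p / s))) := by
  have hs0 : (0 : ℝ) < s := by exact_mod_cast hs
  have hp0 : (0 : ℝ) < p := by exact_mod_cast (hs.trans hsp)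
  set x : ℝ := s / p with hx
  have hx0 : 0 < x := by positivity
  have hx1 : x ≤ 1 := by
    rw [hx, div_le_one hp0]; exact_mod_cast hsp
  have hgen : ∑ v : Fin p → Fin 3, ∏ t, (if tern (v t) ≠ 0 then x else 1) = (1 + 2 * x) ^ p := by
    have := Finset.prod_univ_sum (ι := Fin p) (κ := fun _ => Fin 3) (fun _ => Finset.univ)
      (fun _ j => if tern j ≠ 0 then x else 1)
    rw [Fintype.piFinset_univ] at this
    rw [← this]
    simp only [tern_ne, Fin.sum_univ_three]
    simp
    ring
  have h1 : ((Finset.univ.filter fun v : Fin p → Fin 3 =>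
      (Finset.univ.filter fun t => tern (v t) ≠ 0).card ≤ s).card : ℝ) * x ^ s
      ≤ (1 + 2 * x) ^ p := by
    rw [← hgen, ← nsmul_eq_mul, ← Finset.sum_const]
    refine (Finset.sum_le_sum (g := fun v : Fin p → Fin 3 =>
      ∏ t, (if tern (v t) ≠ 0 then x else 1)) fun v hv => ?_).trans
      (Finset.sum_le_sum_of_subset_of_nonneg (Finset.subset_univ _) fun v _ _ =>
        Finset.prod_nonneg fun t _ => by split_ifs <;> positivity)
    rw [Finset.prod_ite, Finset.prod_const, Finset.prod_const_one, mul_one]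
    exact pow_le_pow_of_le_one hx0.le hx1 (Finset.mem_filter.1 hv).2
  have h2 : (1 + 2 * x) ^ p ≤ Real.exp (2 * s) := by
    have : (1 + 2 * x) ≤ Real.exp (2 * x) := by
      have := Real.add_one_le_exp (2 * x); linarith
    refine (pow_le_pow_left₀ (by positivity) this p).trans ?_
    rw [← Real.exp_nat_mul]
    apply Real.exp_le_exp.2
    rw [hx]; field_simp; exact le_refl _
  have hlog : Real.log (Real.exp 1 * p / s) = 1 - Real.log x := by
    rw [hx, mul_div_assoc, Real.log_mul (by positivity) (by positivity), Real.log_exp,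
      Real.log_div hp0.ne' hs0.ne', Real.log_div hs0.ne' hp0.ne']
    ring
  have h3 : x ^ s = Real.exp (s * Real.log x) := by
    rw [Real.exp_nat_mul, Real.exp_log hx0]
  have hlx : Real.log x ≤ 0 := Real.log_nonpos hx0.le hx1
  have h4 : ((Finset.univ.filter fun v : Fin p → Fin 3 =>
      (Finset.univ.filter fun t => tern (v t) ≠ 0).card ≤ s).card : ℝ)
      ≤ Real.exp (2 * s) / x ^ s := by
    rw [le_div_iff₀ (by positivity)]; exact h1.trans h2
  refine h4.trans ?_
  rw [h3, ← Real.exp_sub, hlog]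
  apply Real.exp_le_exp.2
  nlinarith

noncomputable def Rf (n d p s : ℕ) : ℝ :=
  (n : ℝ) * (p : ℝ) + (d : ℝ) * (s : ℝ) * Real.log (Real.exp 1 * (p : ℝ) / (s : ℝ))

lemma log_ge_one (p s : ℕ) (hs : 1 ≤ s) (hsp : s ≤ p) :
    1 ≤ Real.log (Real.exp 1 * p / s) := by
  have hs0 : (0 : ℝ) < s := by exact_mod_cast hs
  have hp0 : (s : ℝ) ≤ p := by exact_mod_cast hsp
  rw [Real.le_log_iff_exp_le (by have := hs0.trans_le hp0; positivity), le_div_iff₀ hs0]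
  exact mul_le_mul_of_nonneg_left hp0 (Real.exp_pos _).le

lemma Rf_ge (n d p s : ℕ) (hn : 1 ≤ n) (hd : 1 ≤ d) (hs : 1 ≤ s) (hsp : s ≤ p) :
    (p : ℝ) + s ≤ Rf n d p s := by
  have h := log_ge_one p s hs hsp
  have hs0 : (0 : ℝ) < s := by exact_mod_cast hs
  have hp0 : (s : ℝ) ≤ p := by exact_mod_cast hsp
  have hn' : (1 : ℝ) ≤ n := by exact_mod_cast hn
  have hd' : (1 : ℝ) ≤ d := by exact_mod_cast hd
  unfold Rf
  have h1 : (s : ℝ) ≤ d * s := by nlinarith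
  have h2 : (d * s : ℝ) * 1 ≤ d * s * Real.log (Real.exp 1 * p / s) :=
    mul_le_mul_of_nonneg_left h (by positivity)
  nlinarith

lemma Rf_ge_np (n d p s : ℕ) (hs : 1 ≤ s) (hsp : s ≤ p) :
    (n : ℝ) * p ≤ Rf n d p s := by
  have h := log_ge_one p s hs hsp
  unfold Rf
  have : 0 ≤ (d : ℝ) * s * Real.log (Real.exp 1 * p / s) := by positivity
  linarith

lemma card_dictOK (n d p s : ℕ) (hs : 1 ≤ s) (hsp : s ≤ p) :
    ((Finset.univ.filter fun z : Fin p → Fin d → Fin 3 => dictOK s z).card : ℝ)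
      ≤ Real.exp (2 * Rf n d p s) := by
  set F := Finset.univ.filter fun v : Fin p → Fin 3 =>
      (Finset.univ.filter fun t => tern (v t) ≠ 0).card ≤ s with hF
  have h1 : (Finset.univ.filter fun z : Fin p → Fin d → Fin 3 => dictOK s z).card
      ≤ (Fintype.piFinset fun _ : Fin d => F).card := by
    apply Finset.card_le_card_of_injOn (fun z j t => z t j)
    · intro z hz
      have hz' := (Finset.mem_filter.1 hz).2.1
      simp only [Finset.mem_coe, Fintype.mem_piFinset, hF, Finset.mem_filter, Finset.mem_univ,
        true_and]
      exact hz'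
    · intro z _ z' _ h
      funext t j
      exact congrFun (congrFun h j) t
  have h2 : ((Fintype.piFinset fun _ : Fin d => F).card : ℝ) = (F.card : ℝ) ^ d := by
    rw [Fintype.card_piFinset]; simp
  calc _ ≤ ((Fintype.piFinset fun _ : Fin d => F).card : ℝ) := by exact_mod_cast h1
    _ = (F.card : ℝ) ^ d := h2
    _ ≤ Real.exp (2 * (s * Real.log (Real.exp 1 * p / s))) ^ d :=
        pow_le_pow_left₀ (by positivity) (card_col p s hs hsp) d
    _ ≤ _ := by
        rw [← Real.exp_nat_mul]
        apply Real.exp_le_exp.2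
        unfold Rf
        have : (0 : ℝ) ≤ n * p := by positivity
        nlinarith

lemma sum_exp_le_one (a : ℕ) : ∑ k : Fin a, Real.exp (-2 * (((k : ℕ) : ℝ) + 1)) ≤ 1 := by
  have h : ∀ k : Fin a, Real.exp (-2 * (((k : ℕ) : ℝ) + 1)) ≤ (1 / 2 : ℝ) * (1 / 2) ^ (k : ℕ) := by
    intro k
    have e : Real.exp (-2) ≤ 1 / 2 := by
      rw [Real.exp_neg, one_div]
      apply inv_anti₀ (by norm_num)
      have := Real.add_one_le_exp (2 : ℝ); linarith
    have : Real.exp (-2 * (((k : ℕ) : ℝ) + 1)) = Real.exp (-2) ^ ((k : ℕ) + 1) := by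
      rw [← Real.exp_nat_mul]; congr 1; push_cast; ring
    rw [this, ← pow_succ']
    exact pow_le_pow_left₀ (Real.exp_pos _).le e _
  refine (Finset.sum_le_sum fun k _ => h k).trans ?_
  rw [← Finset.mul_sum, Fin.sum_univ_eq_sum_range (fun k => (1 / 2 : ℝ) ^ k),
    geom_sum_eq (by norm_num)]
  have : (0 : ℝ) < (1 / 2) ^ a := by positivity
  have e : (1 / 2 : ℝ) * (((1 / 2) ^ a - 1) / (1 / 2 - 1)) = 1 - (1 / 2) ^ a := by ring
  rw [e]
  linarith

lemma sum_exp2_le_one (a b : ℕ) :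
    ∑ q : Fin a × Fin b, Real.exp (-2 * ((((q.1 : ℕ) + 1 : ℕ) : ℝ) + (((q.2 : ℕ) + 1 : ℕ) : ℝ)))
      ≤ 1 := by
  have : ∀ q : Fin a × Fin b,
      Real.exp (-2 * ((((q.1 : ℕ) + 1 : ℕ) : ℝ) + (((q.2 : ℕ) + 1 : ℕ) : ℝ)))
      = Real.exp (-2 * (((q.1 : ℕ) : ℝ) + 1)) * Real.exp (-2 * (((q.2 : ℕ) : ℝ) + 1)) := fun q => by
    rw [← Real.exp_add]; congr 1; push_cast; ring
  simp_rw [this]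
  rw [Fintype.sum_prod_type]
  simp_rw [← Finset.mul_sum]
  rw [← Finset.sum_mul]
  have h1 := sum_exp_le_one a
  have h2 := sum_exp_le_one b
  have h3 : 0 ≤ ∑ k : Fin b, Real.exp (-2 * (((k : ℕ) : ℝ) + 1)) :=
    Finset.sum_nonneg fun _ _ => (Real.exp_pos _).le
  nlinarith [mul_le_mul_of_nonneg_right h1 h3]

lemma gramDet_dictX {p d : ℕ} (n : ℕ) (z : Fin p → Fin d → Fin 3) :
    gramDet (dictX n z) = (dictZmat z * (dictZmat z)ᵀ).det ^ n := by
  have : (dictX n z)ᵀ * dictX n z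
      = Matrix.kroneckerMap (fun x1 x2 => x1 * x2) (1 : Matrix (Fin n) (Fin n) ℝ)
        (dictZmat z * (dictZmat z)ᵀ) := by
    ext a b
    simp only [Matrix.mul_apply, Matrix.transpose_apply, dictX, Matrix.kroneckerMap_apply,
      dictZmat, Fintype.sum_prod_type, Matrix.one_apply]
    by_cases h : a.1 = b.1
    · simp [h]
    · have h' : ¬ b.1 = a.1 := fun e => h e.symm
      simp [h, h']
  rw [gramDet, this, Matrix.det_kronecker]
  simp

/-! ### Part 4: bounds for a single model -/

lemma integrand_cont {N κ : Type*} [Fintype N] [Fintype κ]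
    (A : Matrix N κ ℝ) (lam : ℝ) (Y : N → ℝ) :
    Continuous (fun Q : κ → ℝ => Real.exp (-(1/2) * (enr fun t => Y t - A.mulVec Q t) ^ 2
          - lam * enr (A.mulVec Q))) := by
  have a1 := continuous_mulVec' A
  have a2 : Continuous (fun Q : κ → ℝ => fun t => Y t - A.mulVec Q t) :=
    continuous_const.sub a1
  have a3 := continuous_enr.comp a2
  have a4 := continuous_enr.comp a1
  simp only [Function.comp_def] at a3 a4
  fun_prop

lemma enr_sub_comm {N : Type*} [Fintype N] (u v : N → ℝ) :
    enr (fun t => u t - v t) = enr (fun t => v t - u t) := by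
  unfold enr; congr 1; exact Finset.sum_congr rfl fun i _ => by ring

lemma integrand_int {N κ : Type*} [Fintype N] [Fintype κ] [DecidableEq κ]
    (A : Matrix N κ ℝ) (hA : 0 < gramDet A) (lam : ℝ) (hl : 0 < lam) (Y : N → ℝ) :
    Integrable (fun Q : κ → ℝ => Real.exp (-(1/2) * (enr fun t => Y t - A.mulVec Q t) ^ 2
          - lam * enr (A.mulVec Q))) := by
  refine (gauss_le A hA (1/2) (by norm_num) Y).1.mono'
    (integrand_cont A lam Y).aestronglyMeasurable (Filter.Eventually.of_forall fun Q => ?_)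
  rw [Real.norm_eq_abs, abs_of_pos (Real.exp_pos _), enr_sub_comm]
  apply Real.exp_le_exp.2
  have := mul_nonneg hl.le (enr_nonneg (A.mulVec Q))
  linarith

lemma expand_sq {N : Type*} [Fintype N] (θs W v : N → ℝ) :
    (enr fun t => (θs t + W t) - v t) ^ 2
      = enr W ^ 2 - 2 * ipr W (fun t => v t - θs t) + (enr fun t => v t - θs t) ^ 2 := by
  rw [enr_sq, enr_sq, enr_sq, ipr, Finset.mul_sum, ← Finset.sum_sub_distrib,
    ← Finset.sum_add_distrib]
  exact Finset.sum_congr rfl fun i _ => by ring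

lemma sqrt_combine (lam c : ℝ) (hc : 0 < c) :
    lam / Real.sqrt π * Real.sqrt (π / c) = lam * Real.sqrt (1 / c) := by
  have h : π / c = π * (1 / c) := by ring
  have hp : Real.sqrt π ≠ 0 := (Real.sqrt_pos.2 Real.pi_pos).ne'
  rw [h, Real.sqrt_mul Real.pi_pos.le]
  field_simp

lemma num_bound {N κ : Type*} [Fintype N] [Fintype κ] [DecidableEq κ]
    (A : Matrix N κ ℝ) (lam : ℝ) (hl : 0 < lam) (θs W : N → ℝ) (X : ℝ) (hX : 0 ≤ X)
    (hgood : ∀ Q : κ → ℝ, |ipr W (fun a => A.mulVec Q a - θs a)|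
        ≤ Real.sqrt X * enr (fun a => A.mulVec Q a - θs a))
    (U : Set (N → ℝ)) (hU : MeasurableSet U) (m0 : ℝ)
    (hm : ∀ θ ∈ U, m0 ≤ (enr fun a => θ a - θs a) ^ 2) :
    Real.sqrt (gramDet A) * (lam / Real.sqrt π) ^ Fintype.card κ *
      ∫ Q in {Q : κ → ℝ | A.mulVec Q ∈ U},
        Real.exp (-(1/2) * (enr fun t => (θs t + W t) - A.mulVec Q t) ^ 2
          - lam * enr (A.mulVec Q))
    ≤ (lam * Real.sqrt 8) ^ Fintype.card κ *
      Real.exp (-(1/2) * enr W ^ 2 - lam * enr θs + (2 * X + 2 * lam ^ 2 - m0 / 8)) := by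
  by_cases hA : 0 < gramDet A
  swap
  · rw [Real.sqrt_eq_zero_of_nonpos (not_lt.1 hA)]
    simp only [zero_mul]
    positivity
  have hsq := Real.sq_sqrt hX
  have hmeas : MeasurableSet {Q : κ → ℝ | A.mulVec Q ∈ U} :=
    (continuous_mulVec' A).measurable hU
  obtain ⟨g1, g2⟩ := gauss_le A hA (1/8) (by norm_num) θs
  set E := Real.exp (-(1/2) * enr W ^ 2 - lam * enr θs + (2 * X + 2 * lam ^ 2 - m0 / 8)) with hE
  have hpt : ∀ Q ∈ {Q : κ → ℝ | A.mulVec Q ∈ U},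
      Real.exp (-(1/2) * (enr fun t => (θs t + W t) - A.mulVec Q t) ^ 2
          - lam * enr (A.mulVec Q))
      ≤ E * Real.exp (-(1/8) * (enr fun t => A.mulVec Q t - θs t) ^ 2) := by
    intro Q hQ
    rw [hE, ← Real.exp_add]
    apply Real.exp_le_exp.2
    rw [expand_sq]
    have h1 := (le_abs_self _).trans (hgood Q)
    have h2 := hm _ hQ
    have h3 := enr_le_add' (A.mulVec Q) θs
    set a := enr fun t => A.mulVec Q t - θs t
    have h4 : lam * enr θs ≤ lam * (enr (A.mulVec Q) + a) := mul_le_mul_of_nonneg_left h3 hl.le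
    nlinarith [sq_nonneg (a - 4 * Real.sqrt X), sq_nonneg (a - 4 * lam)]
  have hint : ∫ Q in {Q : κ → ℝ | A.mulVec Q ∈ U},
        Real.exp (-(1/2) * (enr fun t => (θs t + W t) - A.mulVec Q t) ^ 2
          - lam * enr (A.mulVec Q))
      ≤ E * ∫ Q : κ → ℝ, Real.exp (-(1/8) * (enr fun t => A.mulVec Q t - θs t) ^ 2) := by
    rw [← integral_const_mul]
    refine (setIntegral_mono_on
      (integrand_int A hA lam hl (fun t => θs t + W t)).integrableOn
      (g1.const_mul E).integrableOn hmeas hpt).trans ?_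
    exact setIntegral_le_integral (g1.const_mul E)
      (Filter.Eventually.of_forall fun Q => by simp only [Pi.zero_apply]; positivity)
  calc _ ≤ Real.sqrt (gramDet A) * (lam / Real.sqrt π) ^ Fintype.card κ *
        (E * ∫ Q : κ → ℝ, Real.exp (-(1/8) * (enr fun t => A.mulVec Q t - θs t) ^ 2)) :=
        mul_le_mul_of_nonneg_left hint (by positivity)
    _ = (lam / Real.sqrt π) ^ Fintype.card κ * E * (Real.sqrt (gramDet A) *
        ∫ Q : κ → ℝ, Real.exp (-(1/8) * (enr fun t => A.mulVec Q t - θs t) ^ 2)) := by ring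
    _ ≤ (lam / Real.sqrt π) ^ Fintype.card κ * E * Real.sqrt (π / (1/8)) ^ Fintype.card κ :=
        mul_le_mul_of_nonneg_left g2 (by positivity)
    _ = (lam / Real.sqrt π * Real.sqrt (π / (1/8))) ^ Fintype.card κ * E := by
        rw [mul_pow]; ring
    _ = _ := by
        rw [sqrt_combine _ _ (by norm_num)]; norm_num

lemma den_bound {N κ : Type*} [Fintype N] [Fintype κ] [DecidableEq κ]
    (A : Matrix N κ ℝ) (hA : 0 < gramDet A) (lam : ℝ) (hl : 0 < lam) (θs W : N → ℝ)
    (X : ℝ) (hX : 0 ≤ X)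
    (hgood : ∀ Q : κ → ℝ, |ipr W (fun a => A.mulVec Q a - θs a)|
        ≤ Real.sqrt X * enr (fun a => A.mulVec Q a - θs a))
    (Q0 : κ → ℝ) (hQ0 : θs = A.mulVec Q0) :
    (lam * Real.sqrt (2/3)) ^ Fintype.card κ *
      Real.exp (-(1/2) * enr W ^ 2 - lam * enr θs + (-(1/2) * X - (1/2) * lam ^ 2)) ≤
    Real.sqrt (gramDet A) * (lam / Real.sqrt π) ^ Fintype.card κ *
      ∫ Q : κ → ℝ,
        Real.exp (-(1/2) * (enr fun t => (θs t + W t) - A.mulVec Q t) ^ 2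
          - lam * enr (A.mulVec Q)) := by
  have hsq := Real.sq_sqrt hX
  have g1 := (gauss_le A hA (3/2) (by norm_num) θs).1
  have g2 := gauss_eq A hA (3/2) (by norm_num) Q0
  rw [← hQ0] at g2
  set E := Real.exp (-(1/2) * enr W ^ 2 - lam * enr θs + (-(1/2) * X - (1/2) * lam ^ 2)) with hE
  have hpt : ∀ Q : κ → ℝ,
      E * Real.exp (-(3/2) * (enr fun t => A.mulVec Q t - θs t) ^ 2) ≤
      Real.exp (-(1/2) * (enr fun t => (θs t + W t) - A.mulVec Q t) ^ 2
          - lam * enr (A.mulVec Q)) := by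
    intro Q
    rw [hE, ← Real.exp_add]
    apply Real.exp_le_exp.2
    rw [expand_sq]
    have h1 := (neg_le_of_abs_le (hgood Q))
    have h3 := enr_le_add (A.mulVec Q) θs
    set a := enr fun t => A.mulVec Q t - θs t
    have h4 : lam * enr (A.mulVec Q) ≤ lam * (enr θs + a) := mul_le_mul_of_nonneg_left h3 hl.le
    nlinarith [sq_nonneg (a - Real.sqrt X), sq_nonneg (a - lam)]
  have hint := integral_mono (g1.const_mul E)
    (integrand_int A hA lam hl (fun t => θs t + W t)) hpt
  rw [integral_const_mul] at hint
  calc _ = (lam / Real.sqrt π * Real.sqrt (π / (3/2))) ^ Fintype.card κ * E := by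
        rw [sqrt_combine _ _ (by norm_num)]; norm_num
    _ = (lam / Real.sqrt π) ^ Fintype.card κ * E * Real.sqrt (π / (3/2)) ^ Fintype.card κ := by
        rw [mul_pow]; ring
    _ = Real.sqrt (gramDet A) * (lam / Real.sqrt π) ^ Fintype.card κ *
        (E * ∫ Q : κ → ℝ, Real.exp (-(3/2) * (enr fun t => A.mulVec Q t - θs t) ^ 2)) := by
        rw [← g2]; ring
    _ ≤ _ := mul_le_mul_of_nonneg_left hint (by positivity)

lemma gpostP_le_one {Θ N ι : Type*} [Fintype N] [Fintype ι]
    {κ : ι → Type*} [∀ i, Fintype (κ i)] [∀ i, DecidableEq (κ i)]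
    (w : ι → ℝ) (hw : ∀ i, 0 ≤ w i) (A : (i : ι) → Matrix N (κ i) ℝ)
    (emb : (i : ι) → (κ i → ℝ) → Θ) (lam : ℝ) (hl : 0 < lam) (Y : N → ℝ)
    (Sel : Set ι) (U : Set Θ) : gpostP w A emb lam Y Sel U ≤ 1 := by
  unfold gpostP
  apply div_le_one_of_le₀
  · apply Finset.sum_le_sum
    intro i _
    by_cases hA : 0 < gramDet (A i)
    swap
    · rw [Real.sqrt_eq_zero_of_nonpos (not_lt.1 hA)]
      simp
    have h1 := setIntegral_le_integral (s := {Q : κ i → ℝ | emb i Q ∈ U})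
      (integrand_int (A i) hA lam hl Y)
      (Filter.Eventually.of_forall fun Q => (Real.exp_pos _).le)
    have h2 : (if i ∈ Sel then w i else 0) ≤ w i := by
      split_ifs
      · exact le_refl _
      · exact hw i
    have h3 : 0 ≤ ∫ Q in {Q : κ i → ℝ | emb i Q ∈ U},
        Real.exp (-(1/2) * (enr fun t => Y t - (A i).mulVec Q t) ^ 2
          - lam * enr ((A i).mulVec Q)) := integral_nonneg fun Q => (Real.exp_pos _).le
    have h4 := hw i
    refine mul_le_mul ?_ h1 h3 (by positivity)
    gcongr
  · apply Finset.sum_nonneg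
    intro i _
    have h4 := hw i
    have h3 : 0 ≤ ∫ Q : κ i → ℝ,
        Real.exp (-(1/2) * (enr fun t => Y t - (A i).mulVec Q t) ^ 2
          - lam * enr ((A i).mulVec Q)) := integral_nonneg fun Q => (Real.exp_pos _).le
    positivity

/-! ### Part 5: the models -/

lemma lam_up (lam : ℝ) (hl : 0 < lam) (m : ℕ) :
    (lam * Real.sqrt 8) ^ m ≤ Real.exp ((|Real.log lam| + 2) * m) := by
  have e1 : lam ≤ Real.exp |Real.log lam| := by
    conv_lhs => rw [← Real.exp_log hl]
    exact Real.exp_le_exp.2 (le_abs_self _)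
  have e2 : Real.sqrt 8 ≤ Real.exp 2 := by
    have h1 : Real.sqrt 8 ≤ 3 := by rw [Real.sqrt_le_left (by norm_num)]; norm_num
    have := Real.add_one_le_exp (2 : ℝ); linarith
  rw [mul_comm _ (m : ℝ), Real.exp_nat_mul, Real.exp_add]
  exact pow_le_pow_left₀ (by positivity)
    (mul_le_mul e1 e2 (Real.sqrt_nonneg _) (Real.exp_pos _).le) m

lemma lam_lo (lam : ℝ) (hl : 0 < lam) (m : ℕ) :
    Real.exp (-((|Real.log lam| + 2) * m)) ≤ (lam * Real.sqrt (2/3)) ^ m := by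
  have e1 : Real.exp (-|Real.log lam|) ≤ lam := by
    conv_rhs => rw [← Real.exp_log hl]
    exact Real.exp_le_exp.2 (neg_abs_le _)
  have e2 : Real.exp (-2) ≤ Real.sqrt (2/3) := by
    have h1 : (1/2 : ℝ) ≤ Real.sqrt (2/3) := by
      apply Real.le_sqrt_of_sq_le; norm_num
    have h2 : Real.exp (-2) ≤ 1 / 2 := by
      rw [Real.exp_neg, one_div]
      apply inv_anti₀ (by norm_num)
      have := Real.add_one_le_exp (2 : ℝ); linarith
    linarith
  have : -((|Real.log lam| + 2) * m) = m * (-|Real.log lam| + -2) := by ring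
  rw [this, Real.exp_nat_mul, Real.exp_add]
  exact pow_le_pow_left₀ (by positivity)
    (mul_le_mul e1 e2 (Real.exp_pos _).le hl.le) m

abbrev DIdx (n d : ℕ) : Type :=
  Σ ps : Fin (n ⊓ d) × Fin n, (Fin ((ps.1 : ℕ) + 1) → Fin d → Fin 3)

def okI {n d : ℕ} (i : DIdx n d) : Prop :=
  ((i.1.2 : ℕ) + 1) ≤ ((i.1.1 : ℕ) + 1) ∧ dictOK ((i.1.2 : ℕ) + 1) i.2

noncomputable def RI {n d : ℕ} (q : Fin (n ⊓ d) × Fin n) : ℝ :=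
  Rf n d ((q.1 : ℕ) + 1) ((q.2 : ℕ) + 1)

noncomputable def cardI {n d : ℕ} (q : Fin (n ⊓ d) × Fin n) : ℕ :=
  (Finset.univ.filter fun z' : Fin ((q.1 : ℕ) + 1) → Fin d → Fin 3 =>
            dictOK ((q.2 : ℕ) + 1) z').card

noncomputable def wI (n d : ℕ) (D : ℝ) (i : DIdx n d) : ℝ :=
  (if okI i then 1 else 0) * Real.exp (-3 * D * RI i.1) * ((cardI i.1 : ℕ) : ℝ)⁻¹

lemma dictPost_eq (n d : ℕ) (D lam : ℝ) (Y : Fin n × Fin d → ℝ)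
    (K : Set (ℕ × ℕ)) (U : Set (Fin n × Fin d → ℝ)) :
    dictPost n d D lam Y K U = gpostP (wI n d D) (fun i => dictX n i.2)
      (fun i Q => (dictX n i.2).mulVec Q) lam Y
      {i : DIdx n d | (((i.1.1 : ℕ) + 1), ((i.1.2 : ℕ) + 1)) ∈ K} U := by
  have h : wI n d D = (fun i : Σ ps : Fin (n ⊓ d) × Fin n,
      (Fin ((ps.1 : ℕ) + 1) → Fin d → Fin 3) =>
      (if ((i.1.2 : ℕ) + 1) ≤ ((i.1.1 : ℕ) + 1) ∧ dictOK ((i.1.2 : ℕ) + 1) i.2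
        then 1 else 0) *
        Real.exp (-3 * D * ((n : ℝ) * (((i.1.1 : ℕ) + 1 : ℕ) : ℝ)
          + (d : ℝ) * (((i.1.2 : ℕ) + 1 : ℕ) : ℝ) *
            Real.log (Real.exp 1 * (((i.1.1 : ℕ) + 1 : ℕ) : ℝ)
              / (((i.1.2 : ℕ) + 1 : ℕ) : ℝ)))) *
        ((Finset.univ.filter fun z' : Fin ((i.1.1 : ℕ) + 1) → Fin d → Fin 3 =>
            dictOK ((i.1.2 : ℕ) + 1) z').card : ℝ)⁻¹) := by
    funext i
    unfold wI okI RI cardI Rf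
    congr
  rw [h]
  rfl

lemma wI_nonneg (n d : ℕ) (D : ℝ) (i : DIdx n d) : 0 ≤ wI n d D i := by
  unfold wI; split_ifs <;> positivity

lemma RI_ge {n d : ℕ} (q : Fin (n ⊓ d) × Fin n) (h : (q.2 : ℕ) + 1 ≤ (q.1 : ℕ) + 1) :
    (((q.1 : ℕ) + 1 : ℕ) : ℝ) + (((q.2 : ℕ) + 1 : ℕ) : ℝ) ≤ RI q := by
  have h1 := q.1.2
  have h2 := q.2.2
  have h3 : n ⊓ d ≤ d := inf_le_right
  exact Rf_ge n d _ _ (by omega) (by omega) (by omega) h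

lemma sum_models {n d : ℕ} (f : DIdx n d → ℝ) (g : Fin (n ⊓ d) × Fin n → ℝ) (hg : ∀ q, 0 ≤ g q)
    (hf : ∀ i, okI i → f i ≤ ((cardI i.1 : ℕ) : ℝ)⁻¹ * g i.1)
    (hf0 : ∀ i, ¬ okI i → f i ≤ 0)
    (hgR : ∀ q : Fin (n ⊓ d) × Fin n, (q.2 : ℕ) + 1 ≤ (q.1 : ℕ) + 1 →
      g q ≤ Real.exp (-2 * RI q)) :
    ∑ i, f i ≤ 1 := by
  rw [Fintype.sum_sigma]
  refine (Finset.sum_le_sum fun q _ => ?_).trans (sum_exp2_le_one (n ⊓ d) n)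
  by_cases h : (q.2 : ℕ) + 1 ≤ (q.1 : ℕ) + 1
  · have h1 : ∑ z, f ⟨q, z⟩ ≤ g q := by
      have : ∀ z, f ⟨q, z⟩ ≤ if dictOK ((q.2 : ℕ) + 1) z then ((cardI q : ℕ) : ℝ)⁻¹ * g q else 0 := by
        intro z
        split_ifs with hz
        · exact hf ⟨q, z⟩ ⟨h, hz⟩
        · exact hf0 ⟨q, z⟩ fun hh => hz hh.2
      refine (Finset.sum_le_sum fun z _ => this z).trans ?_
      rw [← Finset.sum_filter, Finset.sum_const, nsmul_eq_mul, ← mul_assoc]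
      have h0 := hg q
      have : ((cardI q : ℕ) : ℝ) * ((cardI q : ℕ) : ℝ)⁻¹ ≤ 1 := mul_inv_le_one
      exact mul_le_of_le_one_left h0 this
    refine h1.trans ((hgR q h).trans (Real.exp_le_exp.2 ?_))
    have := RI_ge q h
    linarith
  · refine le_trans (Finset.sum_nonpos fun z _ => hf0 ⟨q, z⟩ fun hh => h hh.1) (Real.exp_pos _).le

lemma noise_all (n d : ℕ) (Ω : Type) [MeasurableSpace Ω] (P : Measure Ω)
    (ρ : ℝ) (hρ : 0 < ρ) (W : Ω → Fin n × Fin d → ℝ) (hW : subG P ρ W)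
    (θs : Fin n × Fin d → ℝ) (R : ℝ) (hR : 1 ≤ R) :
    P {ω | ¬ ∀ i : DIdx n d, okI i → ∀ Q : Fin n × Fin ((i.1.1 : ℕ) + 1) → ℝ,
        |ipr (W ω) (fun a => (dictX n i.2).mulVec Q a - θs a)|
        ≤ Real.sqrt (48 / ρ * (RI i.1 + R)) * enr (fun a => (dictX n i.2).mulVec Q a - θs a)}
      ≤ ENNReal.ofReal (Real.exp (-2 * R)) := by
  have hRI : ∀ i : DIdx n d, okI i → 0 ≤ RI i.1 := fun i hi => by
    have := RI_ge i.1 hi.1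
    refine le_trans ?_ this
    positivity
  have hsub : {ω | ¬ ∀ i : DIdx n d, okI i → ∀ Q : Fin n × Fin ((i.1.1 : ℕ) + 1) → ℝ,
        |ipr (W ω) (fun a => (dictX n i.2).mulVec Q a - θs a)|
        ≤ Real.sqrt (48 / ρ * (RI i.1 + R)) * enr (fun a => (dictX n i.2).mulVec Q a - θs a)}
      ⊆ ⋃ i ∈ Finset.univ.filter (fun i : DIdx n d => okI i),
        {ω | ¬ ∀ Q : Fin n × Fin ((i.1.1 : ℕ) + 1) → ℝ,
        |ipr (W ω) (fun a => (dictX n i.2).mulVec Q a - θs a)|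
        ≤ 2 * Real.sqrt (12 / ρ * (RI i.1 + R))
          * enr (fun a => (dictX n i.2).mulVec Q a - θs a)} := by
    intro ω hω
    by_contra hcon
    apply hω
    intro i hi
    by_contra h2
    apply hcon
    simp only [Set.mem_iUnion]
    refine ⟨i, by simp [hi], ?_⟩
    have e : Real.sqrt (48 / ρ * (RI i.1 + R)) = 2 * Real.sqrt (12 / ρ * (RI i.1 + R)) := by
      have : 48 / ρ * (RI i.1 + R) = 2 ^ 2 * (12 / ρ * (RI i.1 + R)) := by ring
      rw [this, Real.sqrt_mul (by norm_num), Real.sqrt_sq (by norm_num)]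
    rw [e] at h2
    exact h2
  refine (measure_mono hsub).trans ((measure_biUnion_finset_le _ _).trans ?_)
  have hterm : ∀ i ∈ Finset.univ.filter (fun i : DIdx n d => okI i),
      P {ω | ¬ ∀ Q : Fin n × Fin ((i.1.1 : ℕ) + 1) → ℝ,
        |ipr (W ω) (fun a => (dictX n i.2).mulVec Q a - θs a)|
        ≤ 2 * Real.sqrt (12 / ρ * (RI i.1 + R))
          * enr (fun a => (dictX n i.2).mulVec Q a - θs a)}
      ≤ ENNReal.ofReal (Real.exp (-4 * RI i.1 - 4 * R)) := by
    intro i hi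
    have hi' := (Finset.mem_filter.1 hi).2
    have h0 := hRI i hi'
    have hpos : 0 < 12 / ρ * (RI i.1 + R) := by
      have : 0 < RI i.1 + R := by linarith
      positivity
    refine (noise_model P ρ W hW (dictX n i.2) θs _ (Real.sqrt_pos.2 hpos)).trans ?_
    apply ENNReal.ofReal_le_ofReal
    rw [Real.sq_sqrt hpos.le]
    have e5 : (5 : ℝ) ≤ Real.exp 2 := by
      have h1 : (2.7 : ℝ) ≤ Real.exp 1 := by have := Real.exp_one_gt_d9; linarith
      have h2 : Real.exp 2 = Real.exp 1 * Real.exp 1 := by rw [← Real.exp_add]; norm_num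
      rw [h2]; nlinarith
    have h5 := pow_le_pow_left₀ (by norm_num) e5
      (Fintype.card (Fin n × Fin ((i.1.1 : ℕ) + 1)) + 1)
    rw [← Real.exp_nat_mul] at h5
    refine (mul_le_mul_of_nonneg_right h5 (Real.exp_pos _).le).trans ?_
    rw [← Real.exp_add]
    apply Real.exp_le_exp.2
    have hnp := Rf_ge_np n d ((i.1.1 : ℕ) + 1) ((i.1.2 : ℕ) + 1) (by omega) hi'.1
    change _ ≤ RI i.1 at hnp
    have e6 : -ρ * (12 / ρ * (RI i.1 + R)) / 2 = -6 * (RI i.1 + R) := by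
      field_simp; ring
    rw [e6]
    simp only [Fintype.card_prod, Fintype.card_fin]
    push_cast at hnp ⊢
    nlinarith
  refine (Finset.sum_le_sum hterm).trans ?_
  rw [← ENNReal.ofReal_sum_of_nonneg fun i _ => (Real.exp_pos _).le]
  apply ENNReal.ofReal_le_ofReal
  rw [Finset.sum_filter]
  have key := sum_models (n := n) (d := d)
    (fun i => (if okI i then Real.exp (-4 * RI i.1) else 0))
    (fun q => ((cardI q : ℕ) : ℝ) * Real.exp (-4 * RI q))
    (fun q => by positivity)
    (fun i hi => by
      rw [if_pos hi, ← mul_assoc, inv_mul_cancel₀, one_mul]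
      have : 0 < cardI i.1 := Finset.card_pos.2 ⟨i.2, by simpa using hi.2⟩
      positivity)
    (fun i hi => by rw [if_neg hi])
    (fun q hq => by
      have := card_dictOK n d ((q.1 : ℕ) + 1) ((q.2 : ℕ) + 1) (by omega) hq
      refine (mul_le_mul_of_nonneg_right this (Real.exp_pos _).le).trans ?_
      rw [← Real.exp_add]
      apply Real.exp_le_exp.2
      change 2 * RI q + _ ≤ _
      linarith)
  calc _ = (∑ i : DIdx n d, (if okI i then Real.exp (-4 * RI i.1) else 0)) * Real.exp (-4 * R) := by
        rw [Finset.sum_mul]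
        refine Finset.sum_congr rfl fun i _ => ?_
        split_ifs
        · rw [← Real.exp_add]; congr 1; ring
        · simp
    _ ≤ 1 * Real.exp (-4 * R) := mul_le_mul_of_nonneg_right key (Real.exp_pos _).le
    _ ≤ _ := by rw [one_mul]; apply Real.exp_le_exp.2; linarith

/-! ### Part 6: deterministic posterior bound -/

lemma post_det (n d ps ss : ℕ) (hss : 1 ≤ ss) (hsp : ss ≤ ps) (hps : ps ≤ n ⊓ d)
    (Zs : Fin ps → Fin d → Fin 3) (hZ : dictOK ss Zs) (Qs : Fin n → Fin ps → ℝ)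
    (θs : Fin n × Fin d → ℝ) (hθ : ∀ a, θs a = ∑ t, Qs a.1 t * tern (Zs t a.2))
    (D lam : ℝ) (hl : 0 < lam) (K0 : ℝ) (hK : 0 < K0)
    (W : Fin n × Fin d → ℝ)
    (hgood : ∀ i : DIdx n d, okI i → ∀ Q : Fin n × Fin ((i.1.1 : ℕ) + 1) → ℝ,
        |ipr W (fun a => (dictX n i.2).mulVec Q a - θs a)|
        ≤ Real.sqrt (K0 * (RI i.1 + Rf n d ps ss))
          * enr (fun a => (dictX n i.2).mulVec Q a - θs a))
    (K : Set (ℕ × ℕ)) (U : Set (Fin n × Fin d → ℝ)) (hU : MeasurableSet U) (m0 : ℝ)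
    (hm : ∀ θ ∈ U, m0 ≤ (enr fun a => θ a - θs a) ^ 2)
    (Hc : ∀ p s : ℕ, 0 ≤ Rf n d p s → (p, s) ∈ K →
      -3 * D * (Rf n d p s - Rf n d ps ss)
        + (|Real.log lam| + 4 + 3 * K0 + 3 * lam ^ 2) * (Rf n d p s + Rf n d ps ss) - m0 / 8
      ≤ -2 * Rf n d p s - 2 * Rf n d ps ss) :
    dictPost n d D lam (fun a => θs a + W a) K U ≤ Real.exp (-2 * Rf n d ps ss) := by
  obtain ⟨p', rfl⟩ : ∃ p', ps = p' + 1 := ⟨ps - 1, by omega⟩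
  obtain ⟨s', rfl⟩ : ∃ s', ss = s' + 1 := ⟨ss - 1, by omega⟩
  have hpn : p' < n ⊓ d := by omega
  have hsn : s' < n := lt_of_lt_of_le (by omega : s' < n ⊓ d) inf_le_left
  let q0 : Fin (n ⊓ d) × Fin n := (⟨p', hpn⟩, ⟨s', hsn⟩)
  let i0 : DIdx n d := ⟨q0, Zs⟩
  have hok0 : okI i0 := ⟨hsp, hZ⟩
  have hR0 : RI i0.1 = Rf n d (p' + 1) (s' + 1) := rfl
  set R := Rf n d (p' + 1) (s' + 1) with hRdef
  have hR1 : 1 ≤ R := by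
    have h := RI_ge i0.1 hok0.1
    rw [hR0] at h
    push_cast at h
    have h1 : (0 : ℝ) ≤ ((i0.1.1 : ℕ) : ℝ) := by positivity
    have h2 : (0 : ℝ) ≤ ((i0.1.2 : ℕ) : ℝ) := by positivity
    linarith
  set E := Real.exp (-(1/2) * enr W ^ 2 - lam * enr θs) with hE
  set c := |Real.log lam| + 2 with hc
  have hc0 : 0 ≤ c := by positivity
  -- the lower bound for the denominator
  set d0 := E * Real.exp (-(3 * D + 2 + c + K0) * R - (1/2) * lam ^ 2) with hd0
  have hd0pos : 0 < d0 := by positivity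
  have hden0 : d0 ≤ wI n d D i0 * (Real.sqrt (gramDet (dictX n i0.2)) *
      (lam / Real.sqrt π) ^ Fintype.card (Fin n × Fin ((i0.1.1 : ℕ) + 1)) *
      ∫ Q : Fin n × Fin ((i0.1.1 : ℕ) + 1) → ℝ,
        Real.exp (-(1/2) * (enr fun t => (θs t + W t) - (dictX n i0.2).mulVec Q t) ^ 2
          - lam * enr ((dictX n i0.2).mulVec Q))) := by
    have hA : 0 < gramDet (dictX n i0.2) := by
      rw [gramDet_dictX]; exact pow_pos hZ.2 n
    have hθ' : θs = (dictX n i0.2).mulVec (fun b => Qs b.1 b.2) := by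
      funext a
      rw [hθ a]
      simp only [Matrix.mulVec, dotProduct, dictX, Fintype.sum_prod_type]
      rw [Finset.sum_eq_single a.1]
      · simp only [if_true]
        exact Finset.sum_congr rfl fun t _ => mul_comm _ _
      · intro b _ hb
        refine Finset.sum_eq_zero fun t _ => ?_
        rw [if_neg (fun h => hb h.symm), zero_mul]
      · simp
    have h1 := den_bound (dictX n i0.2) hA lam hl θs W (K0 * (RI i0.1 + R))
      (by rw [hR0]; positivity) (hgood i0 hok0) _ hθ'
    have h2 : Real.exp (-3 * D * R) * Real.exp (-(2 * R)) ≤ wI n d D i0 := by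
      unfold wI
      rw [if_pos hok0, one_mul, hR0]
      refine mul_le_mul_of_nonneg_left ?_ (Real.exp_pos _).le
      rw [Real.exp_neg]
      have hcp : 0 < cardI i0.1 := Finset.card_pos.2 ⟨i0.2, by simpa using hok0.2⟩
      apply inv_anti₀ (by exact_mod_cast hcp)
      exact card_dictOK n d (p' + 1) (s' + 1) hss hsp
    have h3 := lam_lo lam hl (Fintype.card (Fin n × Fin ((i0.1.1 : ℕ) + 1)))
    have h4 : (Fintype.card (Fin n × Fin ((i0.1.1 : ℕ) + 1)) : ℝ) ≤ R := by
      have := Rf_ge_np n d (p' + 1) (s' + 1) hss hsp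
      simp only [Fintype.card_prod, Fintype.card_fin]
      push_cast at this ⊢
      exact this
    have h5 : Real.exp (-(c * R)) * Real.exp (-(1/2) * enr W ^ 2 - lam * enr θs +
        (-(1/2) * (K0 * (RI i0.1 + R)) - (1/2) * lam ^ 2)) ≤ _ :=
      (mul_le_mul_of_nonneg_right ((Real.exp_le_exp.2
        (neg_le_neg (mul_le_mul_of_nonneg_left h4 hc0))).trans h3) (Real.exp_pos _).le).trans h1
    refine le_trans (le_of_eq ?_) (mul_le_mul h2 h5 (by positivity) (wI_nonneg n d D i0))
    rw [hd0, hE, hR0, ← Real.exp_add, ← Real.exp_add, ← Real.exp_add, ← Real.exp_add]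
    congr 1
    ring
  rw [dictPost_eq]
  unfold gpostP
  have hden : d0 ≤ ∑ i : DIdx n d, wI n d D i * Real.sqrt (gramDet (dictX n i.2)) *
      (lam / Real.sqrt π) ^ Fintype.card (Fin n × Fin ((i.1.1 : ℕ) + 1)) *
      ∫ Q : Fin n × Fin ((i.1.1 : ℕ) + 1) → ℝ,
        Real.exp (-(1/2) * (enr fun t => (θs t + W t) - (dictX n i.2).mulVec Q t) ^ 2
          - lam * enr ((dictX n i.2).mulVec Q)) := by
    refine hden0.trans ?_
    rw [← mul_assoc, ← mul_assoc]
    refine Finset.single_le_sum (f := fun i : DIdx n d =>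
      wI n d D i * Real.sqrt (gramDet (dictX n i.2)) *
      (lam / Real.sqrt π) ^ Fintype.card (Fin n × Fin ((i.1.1 : ℕ) + 1)) *
      ∫ Q : Fin n × Fin ((i.1.1 : ℕ) + 1) → ℝ,
        Real.exp (-(1/2) * (enr fun t => (θs t + W t) - (dictX n i.2).mulVec Q t) ^ 2
          - lam * enr ((dictX n i.2).mulVec Q))) (fun i _ => ?_) (Finset.mem_univ i0)
    have h3 : 0 ≤ ∫ Q : Fin n × Fin ((i.1.1 : ℕ) + 1) → ℝ,
        Real.exp (-(1/2) * (enr fun t => (θs t + W t) - (dictX n i.2).mulVec Q t) ^ 2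
          - lam * enr ((dictX n i.2).mulVec Q)) := integral_nonneg fun Q => (Real.exp_pos _).le
    have h4 := wI_nonneg n d D i
    positivity
  rw [div_le_iff₀ (hd0pos.trans_le hden)]
  refine le_trans ?_ (mul_le_mul_of_nonneg_left hden (Real.exp_pos _).le)
  -- the upper bound for the numerator
  rw [← div_le_one (by positivity), Finset.sum_div]
  refine sum_models _ (fun q => Real.exp (-2 * RI q)) (fun q => (Real.exp_pos _).le) ?_ ?_
    (fun q _ => le_refl _)
  · intro i hi
    rw [div_le_iff₀ (by positivity)]
    by_cases hsel : i ∈ {i : DIdx n d | (((i.1.1 : ℕ) + 1), ((i.1.2 : ℕ) + 1)) ∈ K}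
    swap
    · rw [if_neg hsel]
      simp only [zero_mul]
      positivity
    rw [if_pos hsel, mul_assoc, mul_assoc, ← mul_assoc (Real.sqrt _)]
    have hRi : 0 ≤ RI i.1 := by
      have := RI_ge i.1 hi.1
      refine le_trans ?_ this
      positivity
    have h1 := num_bound (dictX n i.2) lam hl θs W (K0 * (RI i.1 + R)) (by positivity)
      (hgood i hi) U hU m0 hm
    have h3 := lam_up lam hl (Fintype.card (Fin n × Fin ((i.1.1 : ℕ) + 1)))
    have h4 : (Fintype.card (Fin n × Fin ((i.1.1 : ℕ) + 1)) : ℝ) ≤ RI i.1 := by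
      have := Rf_ge_np n d ((i.1.1 : ℕ) + 1) ((i.1.2 : ℕ) + 1) (by omega) hi.1
      change _ ≤ RI i.1 at this
      simp only [Fintype.card_prod, Fintype.card_fin]
      push_cast at this ⊢
      exact this
    have h5 := h1.trans (mul_le_mul_of_nonneg_right (h3.trans
      (Real.exp_le_exp.2 (mul_le_mul_of_nonneg_left h4 hc0))) (Real.exp_pos _).le)
    have h6 := Hc _ _ hRi hsel
    change -3 * D * (RI i.1 - R) + _ * (RI i.1 + R) - m0 / 8 ≤ -2 * RI i.1 - 2 * R at h6
    refine (mul_le_mul_of_nonneg_left h5 (wI_nonneg n d D i)).trans ?_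
    unfold wI
    rw [if_pos hi, one_mul, mul_comm (Real.exp (-3 * D * RI i.1)),
      mul_assoc (((cardI i.1 : ℕ) : ℝ)⁻¹), mul_assoc (((cardI i.1 : ℕ) : ℝ)⁻¹)]
    have hci : (0 : ℝ) ≤ ((cardI i.1 : ℕ) : ℝ)⁻¹ := by positivity
    refine mul_le_mul_of_nonneg_left ?_ hci
    rw [hd0, hE]
    simp only [← Real.exp_add]
    apply Real.exp_le_exp.2
    have hl2 : lam ^ 2 * 1 ≤ lam ^ 2 * R := mul_le_mul_of_nonneg_left hR1 (sq_nonneg _)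
    have hl3 : 0 ≤ lam ^ 2 * RI i.1 := by positivity
    have hK3 : 0 ≤ K0 * RI i.1 := by positivity
    have hc' : |Real.log lam| = c - 2 := by rw [hc]; ring
    rw [hc'] at h6
    nlinarith
  · intro i hi
    have : (if i ∈ {i : DIdx n d | (((i.1.1 : ℕ) + 1), ((i.1.2 : ℕ) + 1)) ∈ K}
      then wI n d D i else 0) = 0 := by
      unfold wI
      rw [if_neg hi]
      simp
    rw [this]
    simp

lemma integral_bound {Ω : Type} [MeasurableSpace Ω] (P : Measure Ω) [IsProbabilityMeasure P]
    (f : Ω → ℝ) (hf1 : ∀ ω, f ω ≤ 1) (B : Set Ω) (R : ℝ) (hR : 1 ≤ R)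
    (hB : P B ≤ ENNReal.ofReal (Real.exp (-2 * R)))
    (hf : ∀ ω, ω ∉ B → f ω ≤ Real.exp (-2 * R)) : ∫ ω, f ω ∂P ≤ Real.exp (-1 * R) := by
  by_cases hi : Integrable f P
  swap
  · rw [integral_undef hi]; exact (Real.exp_pos _).le
  have hm := measurableSet_toMeasurable P B
  have hint : Integrable (fun ω => (toMeasurable P B).indicator (fun _ => (1 : ℝ)) ω
      + Real.exp (-2 * R)) P :=
    ((integrable_const (1 : ℝ)).indicator hm).add (integrable_const _)
  have h1 : ∫ ω, f ω ∂P ≤ ∫ ω, ((toMeasurable P B).indicator (fun _ => (1 : ℝ)) ω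
      + Real.exp (-2 * R)) ∂P := by
    refine integral_mono hi hint fun ω => ?_
    by_cases h : ω ∈ toMeasurable P B
    · simp only [Set.indicator_of_mem h]
      have := hf1 ω
      have := Real.exp_pos (-2 * R)
      linarith
    · simp only [Set.indicator_of_notMem h, zero_add]
      exact hf ω fun hb => h (subset_toMeasurable P B hb)
  rw [integral_add ((integrable_const (1 : ℝ)).indicator hm) (integrable_const _),
    integral_indicator_const _ hm, integral_const] at h1
  simp only [smul_eq_mul, mul_one, probReal_univ, one_mul] at h1
  have h2 : P.real (toMeasurable P B) ≤ Real.exp (-2 * R) := by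
    rw [Measure.real, measure_toMeasurable]
    exact ENNReal.toReal_le_of_le_ofReal (Real.exp_pos _).le hB
  have h3 : 2 * Real.exp (-2 * R) ≤ Real.exp (-1 * R) := by
    have e : Real.exp (-1 * R) = Real.exp R * Real.exp (-2 * R) := by
      rw [← Real.exp_add]; congr 1; ring
    rw [e]
    have := Real.add_one_le_exp R
    exact mul_le_mul_of_nonneg_right (by linarith) (Real.exp_pos _).le
  linarith

/-- Corollary 8 (dictionary learning): posterior contraction at the minimax rate
`np* + ds* log(ep*/s*)`, both for the selected model complexity and the Frobenius loss. -/
theorem dictionary_contraction :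
    ∀ lam ρ : ℝ, 0 < lam → 0 < ρ →
    ∃ δ₀ : ℝ, 0 < δ₀ ∧ δ₀ ≤ 1 ∧ ∀ δ : ℝ, 0 < δ → δ < δ₀ →
    ∃ D₀ : ℝ, 0 < D₀ ∧ ∀ D : ℝ, D₀ < D →
    ∃ M C' C'' : ℝ, 0 < M ∧ 0 < C' ∧ 0 < C'' ∧
    ∀ (n d ps ss : ℕ), 1 ≤ ss → ss ≤ ps → ps ≤ n ⊓ d →
    ∀ (Zs : Fin ps → Fin d → Fin 3), dictOK ss Zs →
    ∀ (Qs : Fin n → Fin ps → ℝ) (θs : Fin n × Fin d → ℝ),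
      (∀ a, θs a = ∑ t, Qs a.1 t * tern (Zs t a.2)) →
    ∀ (Ω : Type) (_ : MeasurableSpace Ω) (P : Measure Ω) (_ : IsProbabilityMeasure P)
      (W : Ω → Fin n × Fin d → ℝ), subG P ρ W →
    (∫ ω, dictPost n d D lam (fun a => θs a + W ω a)
          {q : ℕ × ℕ |
            (1 + δ) * ((n : ℝ) * (ps : ℝ)
                + (d : ℝ) * (ss : ℝ) * Real.log (Real.exp 1 * (ps : ℝ) / (ss : ℝ)))
              < (n : ℝ) * (q.1 : ℝ)
                + (d : ℝ) * (q.2 : ℝ) * Real.log (Real.exp 1 * (q.1 : ℝ) / (q.2 : ℝ))}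
          Set.univ ∂P
        ≤ Real.exp (-C' * ((n : ℝ) * (ps : ℝ)
            + (d : ℝ) * (ss : ℝ) * Real.log (Real.exp 1 * (ps : ℝ) / (ss : ℝ))))) ∧
    (∫ ω, dictPost n d D lam (fun a => θs a + W ω a) Set.univ
          {θ : Fin n × Fin d → ℝ |
            M * ((n : ℝ) * (ps : ℝ)
                + (d : ℝ) * (ss : ℝ) * Real.log (Real.exp 1 * (ps : ℝ) / (ss : ℝ)))
              < ∑ a : Fin n × Fin d, (θ a - θs a) ^ 2} ∂P
        ≤ Real.exp (-C'' * ((n : ℝ) * (ps : ℝ)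
            + (d : ℝ) * (ss : ℝ) * Real.log (Real.exp 1 * (ps : ℝ) / (ss : ℝ))))) := by
  intro lam ρ hl hρ
  refine ⟨1, one_pos, le_refl _, fun δ hδ hδ1 => ?_⟩
  set K0 : ℝ := 48 / ρ with hK0
  have hK : 0 < K0 := by positivity
  set L : ℝ := |Real.log lam| + 4 + 3 * K0 + 3 * lam ^ 2 with hL
  have hLpos : 0 < L := by positivity
  refine ⟨(2 * L + 4) / δ, by positivity, fun D hD => ?_⟩
  have hDδ : 2 * L + 4 < D * δ := by rwa [div_lt_iff₀ hδ] at hD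
  have hD0 : 0 < D := lt_trans (by positivity) hD
  have hDL : 2 * L + 4 < D := by nlinarith
  refine ⟨8 * (3 * D + L + 2), 1, 1, by positivity, one_pos, one_pos, ?_⟩
  intro n d ps ss hss hsp hps Zs hZ Qs θs hθ Ω _ P _ W hW
  have hn : 1 ≤ n := by have : n ⊓ d ≤ n := inf_le_left; omega
  have hd : 1 ≤ d := by have : n ⊓ d ≤ d := inf_le_right; omega
  have hRR : (1 : ℝ) ≤ Rf n d ps ss := by
    have h1 := Rf_ge n d ps ss hn hd hss hsp
    have h2 : (1 : ℝ) ≤ ss := by exact_mod_cast hss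
    have h3 : (0 : ℝ) ≤ ps := by positivity
    linarith
  have hnoise := noise_all n d Ω P ρ hρ W hW θs (Rf n d ps ss) hRR
  constructor
  · refine integral_bound P _ (fun ω => ?_) _ (Rf n d ps ss) hRR hnoise (fun ω hω => ?_)
    · rw [dictPost_eq]
      exact gpostP_le_one _ (wI_nonneg n d D) _ _ lam hl _ _ _
    · have hg := not_not.1 hω
      refine post_det n d ps ss hss hsp hps Zs hZ Qs θs hθ D lam hl K0 hK (W ω) hg _ _
        MeasurableSet.univ 0 (fun θ _ => sq_nonneg _) ?_
      intro p s hp0 hps'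
      have hK' : (1 + δ) * Rf n d ps ss < Rf n d p s := hps'
      rw [← hL]
      set x := Rf n d p s
      set r := Rf n d ps ss
      have h1 : r ≤ x := by nlinarith
      have h2 : δ * x ≤ 2 * (x - r) := by nlinarith
      have h3 : D * (δ * x) ≤ D * (2 * (x - r)) := mul_le_mul_of_nonneg_left h2 hD0.le
      have h4 : (2 * L + 4) * x ≤ D * δ * x := mul_le_mul_of_nonneg_right hDδ.le hp0
      have h5 : L * r ≤ L * x := mul_le_mul_of_nonneg_left h1 hLpos.le
      nlinarith
  · refine integral_bound P _ (fun ω => ?_) _ (Rf n d ps ss) hRR hnoise (fun ω hω => ?_)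
    · rw [dictPost_eq]
      exact gpostP_le_one _ (wI_nonneg n d D) _ _ lam hl _ _ _
    · have hg := not_not.1 hω
      refine post_det n d ps ss hss hsp hps Zs hZ Qs θs hθ D lam hl K0 hK (W ω) hg _ _
        ?_ (8 * (3 * D + L + 2) * Rf n d ps ss) (fun θ hθU => ?_) ?_
      · apply measurableSet_lt measurable_const
        fun_prop
      · rw [enr_sq]
        exact le_of_lt hθU
      · intro p s hp0 _
        rw [← hL]
        have h4 : (2 * L + 4) * Rf n d p s ≤ D * Rf n d p s :=
          mul_le_mul_of_nonneg_right hDL.le hp0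
        have h5 : 0 ≤ L * Rf n d p s := by positivity
        have h6 : 0 ≤ D * Rf n d p s := by positivity
        nlinarith
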